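/- arXiv:2505.09799 — 2 statements merged into one kernel-verified Lean document; each statement's English description precedes it below -/
import Mathlib

section
/- Suppose the weight matrix W of a network (V, W) is symmetric. Then a function Φ : A^V → ℝ is an exact potential function for the signed network coordination game on (V, W) with external field h if and only if there exists a constant C ∈ ℝ such that Φ(x) = (1/2) Σ_{i,j∈V} W_ij x_i x_j + Σ_{i∈V} h_i x_i + C for every strategy profile x ∈ A^V. -/
open Finset Function

noncomputable section

/-- The binary action set `A = {−1, +1}`, as a subtype of `ℝ`. -/
abbrev Act : Type := {r : ℝ // r = 1 ∨ r = -1}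

def onePt : Act := ⟨1, Or.inl rfl⟩

def negOnePt : Act := ⟨-1, Or.inr rfl⟩

def actMul (a b : Act) : Act :=
  ⟨(a : ℝ) * (b : ℝ), by rcases a.2 with h1 | h1 <;> rcases b.2 with h2 | h2 <;> norm_num [h1, h2]⟩

def actNeg (a : Act) : Act :=
  ⟨-(a : ℝ), by rcases a.2 with h1 | h1 <;> norm_num [h1]⟩

/-- Utility of player `i` in the SNC game on the network `(V, W)` with external field `h`. -/
def utility {V : Type*} [Fintype V] (W : V → V → ℝ) (h : V → ℝ) (i : V) (x : V → Act) : ℝ :=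
  h i * (x i : ℝ) + (x i : ℝ) * ∑ j, W i j * (x j : ℝ)

/-- Best response set of player `i` (depends only on `x_{−i}`). -/
def bestResponse {V : Type*} [Fintype V] [DecidableEq V] (W : V → V → ℝ) (h : V → ℝ)
    (i : V) (x : V → Act) : Set Act :=
  {a | ∀ b : Act, utility W h i (Function.update x i b) ≤ utility W h i (Function.update x i a)}

/-- Nash equilibrium of the SNC game. -/
def IsNash {V : Type*} [Fintype V] [DecidableEq V] (W : V → V → ℝ) (h : V → ℝ)
    (x : V → Act) : Prop :=
  ∀ i, x i ∈ bestResponse W h i x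

/-- One step of a best-response path. -/
def BRStep {V : Type*} [Fintype V] [DecidableEq V] (W : V → V → ℝ) (h : V → ℝ)
    (x y : V → Act) : Prop :=
  ∃ i, (∀ j, j ≠ i → y j = x j) ∧ y i ≠ x i ∧ y i ∈ bestResponse W h i x

def GloballyBRReachable {V : Type*} [Fintype V] [DecidableEq V] (W : V → V → ℝ) (h : V → ℝ)
    (X : Set (V → Act)) : Prop :=
  ∀ x : V → Act, ∃ y ∈ X, Relation.ReflTransGen (BRStep W h) x y

def BRInvariant {V : Type*} [Fintype V] [DecidableEq V] (W : V → V → ℝ) (h : V → ℝ)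
    (X : Set (V → Act)) : Prop :=
  ∀ x ∈ X, ∀ y, Relation.ReflTransGen (BRStep W h) x y → y ∈ X

def GloballyBRStable {V : Type*} [Fintype V] [DecidableEq V] (W : V → V → ℝ) (h : V → ℝ)
    (X : Set (V → Act)) : Prop :=
  GloballyBRReachable W h X ∧ BRInvariant W h X

/-- Structural balance of a signed weight matrix. -/
def StructurallyBalanced {V : Type*} (W : V → V → ℝ) : Prop :=
  ∃ P : Set V, (∀ i j, (i ∈ P ↔ j ∈ P) → 0 ≤ W i j) ∧ (∀ i j, ¬(i ∈ P ↔ j ∈ P) → W i j ≤ 0)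

/-- `(h^−, h^+)`-indecomposability of a network. -/
def Indecomposable {V : Type*} [Fintype V] [DecidableEq V] (W : V → V → ℝ)
    (hm hp : V → ℝ) : Prop :=
  ∀ P M : Finset V, P ∪ M = Finset.univ → Disjoint P M → P.Nonempty → M.Nonempty →
    (∃ i ∈ P, ∑ j ∈ P, |W i j| + hp i < ∑ j ∈ M, |W i j|) ∨
    (∃ i ∈ M, (∑ j ∈ M, |W i j|) - hm i < ∑ j ∈ P, |W i j|)

/-- `Φ` is an exact potential function for the SNC game. -/
def IsExactPotential {V : Type*} [Fintype V] (W : V → V → ℝ) (h : V → ℝ)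
    (Φ : (V → Act) → ℝ) : Prop :=
  ∀ (i : V) (x y : V → Act), (∀ j, j ≠ i → x j = y j) →
    utility W h i y - utility W h i x = Φ y - Φ x

theorem pot_aux {V : Type*} [Fintype V] [DecidableEq V]
    (W : V → V → ℝ) (h : V → ℝ) (hdiag : ∀ i, W i i = 0)
    (hsymm : ∀ i j, W i j = W j i) (C : ℝ) :
    IsExactPotential W h (fun x => (1 / 2) * ∑ i, ∑ j, W i j * (x i : ℝ) * (x j : ℝ)
              + ∑ i, h i * (x i : ℝ) + C) := by
  intro i x y hxy
  have hd : ∀ k, (y k : ℝ) = x k + if k = i then ((y i : ℝ) - x i) else 0 := by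
    intro k
    by_cases hk : k = i
    · subst hk; simp
    · simp [hk, hxy k hk]
  have h1 : ∑ j, W i j * (y j : ℝ) = ∑ j, W i j * (x j : ℝ) := by
    refine Finset.sum_congr rfl fun j _ => ?_
    by_cases hj : j = i
    · subst hj; simp [hdiag]
    · rw [hxy j hj]
  have h2 : ∑ k, h k * (y k : ℝ) = ∑ k, h k * (x k : ℝ) + h i * ((y i : ℝ) - x i) := by
    rw [Finset.sum_congr rfl fun k _ => by rw [hd k]]
    simp [mul_add, Finset.sum_add_distrib]
  have e1 : ∀ z w : V → Act, ∑ k, ∑ j, W k j * (z k : ℝ) * (w j : ℝ)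
      = ∑ k, (z k : ℝ) * ∑ j, W k j * (w j : ℝ) := by
    intro z w
    refine Finset.sum_congr rfl fun k _ => ?_
    rw [Finset.mul_sum]
    exact Finset.sum_congr rfl fun j _ => by ring
  have e2 : ∀ w : V → Act, ∑ k, ∑ j, W k j * (y k : ℝ) * (w j : ℝ)
      = ∑ k, ∑ j, W k j * (x k : ℝ) * (w j : ℝ)
        + ((y i : ℝ) - x i) * ∑ j, W i j * (w j : ℝ) := by
    intro w
    rw [e1, e1, Finset.sum_congr rfl fun k _ => by rw [hd k]]
    simp [add_mul, Finset.sum_add_distrib]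
  have e3 : ∑ k, ∑ j, W k j * (x k : ℝ) * (y j : ℝ)
      = ∑ k, ∑ j, W k j * (y k : ℝ) * (x j : ℝ) := by
    rw [Finset.sum_comm]
    refine Finset.sum_congr rfl fun k _ => Finset.sum_congr rfl fun j _ => ?_
    rw [hsymm j k]; ring
  simp only [utility]
  rw [e2 y, e3, e2 x, h1, h2]
  ring

theorem pot_unique {V : Type*} [Fintype V] [DecidableEq V]
    (W : V → V → ℝ) (h : V → ℝ) (F G : (V → Act) → ℝ)
    (hF : IsExactPotential W h F) (hG : IsExactPotential W h G) (x y : V → Act) :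
    F x - G x = F y - G y := by
  have key : ∀ s : Finset V, F (s.piecewise x y) - G (s.piecewise x y) = F y - G y := by
    intro s
    induction s using Finset.induction_on with
    | empty => simp
    | insert a s ha ih =>
      rw [← ih]
      have hh : ∀ j, j ≠ a → s.piecewise x y j = (insert a s).piecewise x y j := by
        intro j hj
        simp [Finset.piecewise, hj]
      have q1 := hF a _ _ hh
      have q2 := hG a _ _ hh
      linarith
  simpa using key Finset.univ

theorem stmt1 {V : Type*} [Fintype V] [DecidableEq V] [Nonempty V]
    (W : V → V → ℝ) (h : V → ℝ) (hdiag : ∀ i, W i i = 0)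
    (hsymm : ∀ i j, W i j = W j i) (Φ : (V → Act) → ℝ) :
    IsExactPotential W h Φ ↔
      ∃ C : ℝ, ∀ x : V → Act,
        Φ x = (1 / 2) * ∑ i, ∑ j, W i j * (x i : ℝ) * (x j : ℝ)
              + ∑ i, h i * (x i : ℝ) + C := by
  constructor
  · intro hΦ
    have x0 : V → Act := fun _ => onePt
    refine ⟨Φ x0 - ((1 / 2) * ∑ i, ∑ j, W i j * (x0 i : ℝ) * (x0 j : ℝ)
              + ∑ i, h i * (x0 i : ℝ) + 0), fun x => ?_⟩
    have := pot_unique W h _ _ hΦ (pot_aux W h hdiag hsymm 0) x x0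
    linarith
  · rintro ⟨C, hC⟩
    have : Φ = _ := funext hC
    rw [this]
    exact pot_aux W h hdiag hsymm C
end
end

section
/- The signed network coordination game on a network (V, W) with external field h is super-modular if and only if the weight matrix W is non-negative (i.e., W_ij ≥ 0 for all i, j ∈ V). -/
open Finset Function

noncomputable section

/-- The SNC game is super-modular: increasing differences with respect to the
componentwise order on strategy profiles (with actions ordered as reals, `−1 < +1`). -/
def Supermodular {V : Type*} [Fintype V] [DecidableEq V] (W : V → V → ℝ) (h : V → ℝ) : Prop :=
  ∀ (i : V) (x y : V → Act), (∀ j, (x j : ℝ) ≤ (y j : ℝ)) →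
    utility W h i (Function.update x i onePt) - utility W h i (Function.update x i negOnePt) ≤
    utility W h i (Function.update y i onePt) - utility W h i (Function.update y i negOnePt)

lemma utility_update {V : Type*} [Fintype V] [DecidableEq V]
    (W : V → V → ℝ) (h : V → ℝ) (hdiag : ∀ i, W i i = 0) (i : V) (x : V → Act) (a : Act) :
    utility W h i (Function.update x i a) =
      h i * (a : ℝ) + (a : ℝ) * ∑ j, W i j * (x j : ℝ) := by
  have hs : ∑ j, W i j * ((Function.update x i a j : Act) : ℝ) = ∑ j, W i j * (x j : ℝ) := by
    refine Finset.sum_congr rfl fun j _ => ?_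
    by_cases hj : j = i
    · subst hj
      simp [hdiag]
    · rw [Function.update_of_ne hj]
  unfold utility
  rw [hs, Function.update_self]

theorem stmt3 {V : Type*} [Fintype V] [DecidableEq V] [Nonempty V]
    (W : V → V → ℝ) (h : V → ℝ) (hdiag : ∀ i, W i i = 0) :
    Supermodular W h ↔ (∀ i j, 0 ≤ W i j) := by
  unfold Supermodular
  simp only [utility_update W h hdiag]
  have h1 : (onePt : ℝ) = 1 := rfl
  have h2 : (negOnePt : ℝ) = -1 := rfl
  rw [h1, h2]
  constructor
  · intro H i j
    have hle : ∀ k, ((negOnePt : Act) : ℝ) ≤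
        ((Function.update (fun _ : V => negOnePt) j onePt k : Act) : ℝ) := by
      intro k
      by_cases hk : k = j
      · subst hk
        rw [Function.update_self, h1, h2]
        norm_num
      · rw [Function.update_of_ne hk]
    have key := H i (fun _ => negOnePt) (Function.update (fun _ => negOnePt) j onePt) hle
    have hs : ∑ k, W i k * ((Function.update (fun _ : V => negOnePt) j onePt k : Act) : ℝ)
        = ∑ k, W i k * (negOnePt : ℝ) + 2 * W i j := by
      have : ∀ k, W i k * ((Function.update (fun _ : V => negOnePt) j onePt k : Act) : ℝ)
          = W i k * (negOnePt : ℝ) + (if k = j then 2 * W i k else 0) := by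
        intro k
        by_cases hk : k = j
        · subst hk
          rw [Function.update_self, h1, h2, if_pos rfl]
          ring
        · rw [Function.update_of_ne hk, if_neg hk, add_zero]
      rw [Finset.sum_congr rfl fun k _ => this k, Finset.sum_add_distrib]
      simp
    rw [hs] at key
    linarith
  · intro H i x y hxy
    have : ∑ j, W i j * (x j : ℝ) ≤ ∑ j, W i j * (y j : ℝ) :=
      Finset.sum_le_sum fun j _ => mul_le_mul_of_nonneg_left (hxy j) (H i j)
    linarith
end
end
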